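/- Let l ≥ 1 and let P = {P_0,…,P_{l−1}} be a partition of ω into infinite sets with min P_i < min P_j whenever i < j. Let E ∈ 𝓔^P_∞, let n < ω, set a = r_n(E), and let 𝓞 be any set of approximations of length n+1 (restrictions r_{n+1}(G) of members G of 𝓔^P_∞). Then there exists F ∈ [a,E] such that either r_{n+1}(G) ∈ 𝓞 for every G ∈ [a,F], or r_{n+1}(G) ∉ 𝓞 for every G ∈ [a,F]. -/

import Mathlib

open Set

namespace DualRamsey

/-- `F` is a coarsening of `E` (written `F ≤ E` in the paper): every class of `F`
is a union of classes of `E`. -/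
def Coarsens {X : Type*} (F E : Setoid X) : Prop := ∀ a b, E.r a b → F.r a b

/-- The set of equivalence classes of a setoid. -/
def classes {X : Type*} (E : Setoid X) : Set (Set X) := {C | ∃ x, C = {y | E.r x y}}

/-- The set of minimal representatives of the classes of an equivalence relation on ℕ. -/
def minReps (E : Setoid ℕ) : Set ℕ := {n | ∀ m, E.r n m → n ≤ m}

/-- `pRep E k` is `p_k(E)`, the k-th minimal representative in increasing order. -/
noncomputable def pRep (E : Setoid ℕ) (k : ℕ) : ℕ := Nat.nth (· ∈ minReps E) k

/-- `approx n E` is the n-th approximation `r_n(E)`: `E` restricted to `{0,…,p_n(E)-1}`,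
identified with its graph. -/
noncomputable def approx (n : ℕ) (E : Setoid ℕ) : Set (ℕ × ℕ) :=
  {q | q.1 < pRep E n ∧ q.2 < pRep E n ∧ E.r q.1 q.2}

/-- Basic set `[a, E]` relative to a space `S` of equivalence relations. -/
noncomputable def basicSet (S : Set (Setoid ℕ)) (a : Set (ℕ × ℕ)) (E : ↥S) : Set ↥S :=
  {F | Coarsens F.1 E.1 ∧ ∃ n, approx n F.1 = a}

/-- The Ellentuck topology on a space `S` of equivalence relations. -/
noncomputable def ellentuckTop (S : Set (Setoid ℕ)) : TopologicalSpace ↥S :=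
  TopologicalSpace.generateFrom {U | ∃ a E, U = basicSet S a E}

def IsRamsey (S : Set (Setoid ℕ)) (X : Set ↥S) : Prop :=
  ∀ (a : Set (ℕ × ℕ)) (B : ↥S), (basicSet S a B).Nonempty →
    ∃ A ∈ basicSet S a B, basicSet S a A ⊆ X ∨ basicSet S a A ∩ X = ∅

def IsRamseyNull (S : Set (Setoid ℕ)) (X : Set ↥S) : Prop :=
  ∀ (a : Set (ℕ × ℕ)) (B : ↥S), (basicSet S a B).Nonempty →
    ∃ A ∈ basicSet S a B, basicSet S a A ∩ X = ∅

/-- The property of Baire with respect to the Ellentuck topology. -/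
noncomputable def HasBP (S : Set (Setoid ℕ)) (X : Set ↥S) : Prop :=
  ∃ O M : Set ↥S, (ellentuckTop S).IsOpen O ∧ @IsMeagre _ (ellentuckTop S) M ∧
    X = (O \ M) ∪ (M \ O)

/-- The Souslin operation applied to a scheme indexed by finite sequences of naturals. -/
def souslinOp {X : Type*} (A : List ℕ → Set X) : Set X :=
  ⋃ x : ℕ → ℕ, ⋂ n : ℕ, A ((List.range n).map x)

/-- `Y` belongs to the smallest field of sets containing all `t`-open sets and
closed under the Souslin operation. -/
def SouslinMeasurable {X : Type*} (t : TopologicalSpace X) (Y : Set X) : Prop :=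
  ∀ 𝒜 : Set (Set X),
    (∀ U, t.IsOpen U → U ∈ 𝒜) →
    (∀ A ∈ 𝒜, Aᶜ ∈ 𝒜) →
    (∀ A ∈ 𝒜, ∀ B ∈ 𝒜, A ∪ B ∈ 𝒜) →
    (∀ f : List ℕ → Set X, (∀ s, f s ∈ 𝒜) → souslinOp f ∈ 𝒜) →
    Y ∈ 𝒜

/-- The graph of an equivalence relation as a boolean-valued function. -/
noncomputable def graphMap {X : Type*} (E : Setoid X) : X × X → Bool :=
  fun q => @decide (E.r q.1 q.2) (Classical.dec _)

/-- The metrizable topology on a space of equivalence relations, as a subspace of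
`2^(X × X)` via graphs. -/
noncomputable def graphTop {X : Type*} (S : Set (Setoid X)) : TopologicalSpace ↥S :=
  TopologicalSpace.induced (fun E => graphMap E.1) inferInstance



/-- `𝓔^P_∞` for a partition `P` of ℕ into `l` infinite pieces: the `P`-alternating
equivalence relations, i.e. those with infinitely many classes whose k-th minimal
representative lies in `P (k mod l)`. -/
noncomputable def EPalt (l : ℕ) (hl : 0 < l) (P : Fin l → Set ℕ) : Set (Setoid ℕ) :=
  {E | (classes E).Infinite ∧ ∀ k : ℕ, pRep E k ∈ P ⟨k % l, Nat.mod_lt k hl⟩}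

attribute [local instance] Ultrafilter.mul Ultrafilter.semigroup

open Filter

/-- Existence of a closed minimal left ideal in the semigroup of ultrafilters. -/
theorem exists_min_left_ideal (M : Type*) [Semigroup M] [Nonempty M] :
    ∃ N : Set (Ultrafilter M), IsClosed N ∧ N.Nonempty ∧ (∀ u, ∀ m ∈ N, u * m ∈ N) ∧
      ∀ p ∈ N, ∀ m ∈ N, ∃ u, m = u * p := by
  let S : Set (Set (Ultrafilter M)) :=
    { N | IsClosed N ∧ N.Nonempty ∧ ∀ u, ∀ m ∈ N, u * m ∈ N }
  have key : ∃ N', Minimal (· ∈ S) N' := by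
    refine zorn_superset _ fun c hcs hc => ?_
    refine
      ⟨⋂₀ c, ⟨isClosed_sInter fun t ht => (hcs ht).1, ?_, fun m m' hm' => ?_⟩, fun s hs =>
        Set.sInter_subset_of_mem hs⟩
    · obtain rfl | hcnemp := c.eq_empty_or_nonempty
      · rw [Set.sInter_empty]
        apply Set.univ_nonempty
      convert!
        @IsCompact.nonempty_iInter_of_directed_nonempty_isCompact_isClosed _ _ _ hcnemp.coe_sort
          ((↑) : c → Set (Ultrafilter M)) ?_ ?_ ?_ ?_
      · exact Set.sInter_eq_iInter
      · refine DirectedOn.directed_val (IsChain.directedOn hc.symm)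
      exacts [fun i => (hcs i.prop).2.1, fun i => (hcs i.prop).1.isCompact, fun i => (hcs i.prop).1]
    · rw [Set.mem_sInter]
      exact fun t ht => (hcs ht).2.2 m m' (Set.mem_sInter.mp hm' t ht)
  obtain ⟨N, hN⟩ := key
  obtain ⟨N_closed, hne, N_mul⟩ := hN.prop
  refine ⟨N, N_closed, hne, N_mul, fun p hp m hm => ?_⟩
  have h : Set.range (· * p) = N := by
    apply hN.eq_of_subset
    · refine ⟨(isCompact_range (Ultrafilter.continuous_mul_left p)).isClosed,
        ⟨_, ⟨p, rfl⟩⟩, ?_⟩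
      rintro u _ ⟨m', rfl⟩
      exact ⟨u * m', mul_assoc _ _ _⟩
    · rintro _ ⟨m', rfl⟩
      exact N_mul _ _ hp
  rw [← h] at hm
  obtain ⟨u, hu⟩ := hm
  exact ⟨u, hu.symm⟩

/-- Substituting a letter for the variable `none`. -/
def sub {B : Type*} (a : B) : FreeMonoid (Option B) →* FreeMonoid B :=
  FreeMonoid.map (fun o => o.getD a)

theorem map_mul_uf {M N : Type*} [Monoid M] [Monoid N] (f : M →* N) (u v : Ultrafilter M) :
    (u * v).map f = u.map f * v.map f := by
  apply Ultrafilter.coe_inj.mp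
  apply Filter.ext'
  intro p
  rw [Ultrafilter.eventually_mul]
  rw [Ultrafilter.coe_map, Filter.eventually_map, Ultrafilter.eventually_mul]
  simp [Filter.eventually_map]

theorem continuous_map_uf {M N : Type*} (f : M → N) :
    Continuous (fun u : Ultrafilter M => u.map f) :=
  ultrafilterBasis_is_basis.continuous_iff.2 <| Set.forall_mem_range.mpr fun s ↦
    ultrafilter_isOpen_basic (f ⁻¹' s)

theorem exists_good_uf (B : Type*) :
    ∃ e : Ultrafilter (FreeMonoid (Option B)),
      (∀ᶠ v in (e : Filter (FreeMonoid (Option B))), ∃ t, v = FreeMonoid.of none * t) ∧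
      ∀ a b : B, e.map (sub a) * e.map (sub b) = e.map (sub a) := by
  obtain ⟨M, hMc, ⟨p, hp⟩, hMl, hMm⟩ := exists_min_left_ideal (FreeMonoid B)
  let V : Set (FreeMonoid (Option B)) := {v | ∃ t, v = FreeMonoid.of none * t}
  let N : Set (Ultrafilter (FreeMonoid (Option B))) :=
    {u | V ∈ u} ∩ ⋂ a : B, {u | u.map (sub a) ∈ M}
  have hNc : IsClosed N := by
    refine (ultrafilter_isClosed_basic V).inter (isClosed_iInter fun a => ?_)
    exact hMc.preimage (continuous_map_uf (sub a))
  have hNe : N.Nonempty := by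
    refine ⟨(pure (FreeMonoid.of none) : Ultrafilter _) * p.map (FreeMonoid.map some), ?_, ?_⟩
    · have h : ∀ᶠ v in (((pure (FreeMonoid.of none) : Ultrafilter (FreeMonoid (Option B))) *
          p.map (FreeMonoid.map some) : Ultrafilter (FreeMonoid (Option B))) :
          Filter (FreeMonoid (Option B))), v ∈ V := by
        rw [Ultrafilter.eventually_mul, Ultrafilter.coe_pure, Filter.eventually_pure]
        exact Filter.Eventually.of_forall fun y => ⟨y, rfl⟩
      exact h
    · rw [Set.mem_iInter]
      intro a
      show Ultrafilter.map _ _ ∈ M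
      rw [map_mul_uf]
      apply hMl
      rw [Ultrafilter.map_map]
      convert hp
      convert Ultrafilter.map_id p
      ext x : 1
      show sub a (FreeMonoid.map some x) = x
      induction x using FreeMonoid.recOn with
      | one => simp
      | of_mul x xs ih => simp [ih]; rfl
  have hNm : ∀ u ∈ N, ∀ v ∈ N, u * v ∈ N := by
    rintro u ⟨hu, hu'⟩ v ⟨hv, hv'⟩
    rw [Set.mem_iInter] at hu' hv'
    refine ⟨?_, ?_⟩
    · show ∀ᶠ v in (↑(u * v) : Filter _), v ∈ V
      rw [Ultrafilter.eventually_mul]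
      have : ∀ᶠ x in (u : Filter _), x ∈ V := hu
      filter_upwards [this] with x hx
      refine Filter.Eventually.of_forall fun y => ?_
      obtain ⟨t, rfl⟩ := hx
      exact ⟨t * y, mul_assoc _ _ _⟩
    · rw [Set.mem_iInter]
      intro a
      show Ultrafilter.map _ _ ∈ M
      rw [map_mul_uf]
      exact hMl _ _ (hv' a)
  obtain ⟨e, heN, he⟩ := exists_idempotent_in_compact_subsemigroup
    Ultrafilter.continuous_mul_left N hNe hNc.isCompact hNm
  refine ⟨e, heN.1, fun a b => ?_⟩
  have h' := Set.mem_iInter.1 heN.2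
  obtain ⟨u, hu⟩ := hMm _ (h' b) _ (h' a)
  rw [hu, mul_assoc, ← map_mul_uf, he]

theorem carlson_simpson_aux {B : Type*} [Finite B] [Nonempty B] (C : Set (List B)) :
    ∃ D : Set (List B), D.Nonempty ∧ (D ⊆ C ∨ D ⊆ Cᶜ) ∧
      ∀ m : ℕ, ∃ v : List (Option B), ∀ w ∈ D, w.length = m → ∀ a : B,
        w ++ (none :: v).map (fun o => o.getD a) ∈ D := by
  obtain ⟨e, he, hab⟩ := exists_good_uf B
  obtain ⟨b₀⟩ := ‹Nonempty B›
  -- the set of good words for a colour in the ultrafilter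
  have main : ∀ C : Set (FreeMonoid B), C ∈ e.map (sub b₀) → 
      ∃ D : Set (FreeMonoid B), D.Nonempty ∧ D ⊆ C ∧ ∀ w ∈ D,
        ∀ᶠ v in (e : Filter (FreeMonoid (Option B))), ∀ a : B, w * sub a v ∈ D := by
    intro C hC
    have h2 : ∀ (a b : B) (p : FreeMonoid B → Prop),
        (∀ᶠ v in (e : Filter (FreeMonoid (Option B))), p (sub a v)) →
        ∀ᶠ v in (e : Filter (FreeMonoid (Option B))),
          ∀ᶠ v' in (e : Filter (FreeMonoid (Option B))), p (sub a v * sub b v') := by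
      intro a b p hp
      have : ∀ᶠ x in (e.map (sub a) : Filter (FreeMonoid B)), p x := hp
      rw [← hab a b, Ultrafilter.eventually_mul] at this
      exact this
    have hC' : ∀ᶠ v in (e : Filter (FreeMonoid (Option B))), sub b₀ v ∈ C := hC
    refine ⟨{w | w ∈ C ∧ ∀ a, ∀ᶠ v in (e : Filter (FreeMonoid (Option B))), w * sub a v ∈ C},
      ?_, fun w hw => hw.1, ?_⟩
    · have := hC'.and (Filter.eventually_all.2 fun a => h2 b₀ a (· ∈ C) hC')
      obtain ⟨v, hv⟩ := this.exists
      exact ⟨_, hv⟩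
    · rintro w ⟨hw, hw'⟩
      rw [Filter.eventually_all]
      intro a
      have := (hw' a).and (Filter.eventually_all.2 fun b => h2 a b (fun x => w * x ∈ C) (hw' a))
      filter_upwards [this] with v hv
      refine ⟨hv.1, fun b => ?_⟩
      filter_upwards [hv.2 b] with v' hv'
      rw [mul_assoc]
      exact hv'
  have main2 : ∃ D : Set (FreeMonoid B), D.Nonempty ∧ (D ⊆ C ∨ D ⊆ Cᶜ) ∧ ∀ w ∈ D,
        ∀ᶠ v in (e : Filter (FreeMonoid (Option B))), ∀ a : B, w * sub a v ∈ D := by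
    rcases Ultrafilter.mem_or_compl_mem (e.map (sub b₀)) (C : Set (FreeMonoid B)) with h | h
    · obtain ⟨D, h1, h2, h3⟩ := main _ h
      exact ⟨D, h1, Or.inl h2, h3⟩
    · obtain ⟨D, h1, h2, h3⟩ := main _ h
      exact ⟨D, h1, Or.inr h2, h3⟩
  obtain ⟨D, hD1, hD2, hD3⟩ := main2
  refine ⟨D, hD1, hD2, fun m => ?_⟩
  have hfin : Set.Finite {w : FreeMonoid B | List.length w = m} := List.finite_length_eq B m
  have := (Filter.eventually_all_finite (l := (e : Filter (FreeMonoid (Option B)))) 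
    (p := fun (w : FreeMonoid B) (v : FreeMonoid (Option B)) => w ∈ D → ∀ a : B,
      w * sub a v ∈ D) hfin).2 (by
      intro w _
      by_cases hw : w ∈ D
      · filter_upwards [hD3 w hw] with v hv _ using hv
      · exact Filter.Eventually.of_forall fun v h => absurd h hw)
  obtain ⟨v, ⟨t, rfl⟩, hv⟩ := (he.and this).exists
  exact ⟨t, fun w hw hl a => hv w hl hw a⟩

theorem carlson_simpson {B : Type*} [Finite B] [Nonempty B] (C : Set (List B)) :
    ∃ (s : ℕ → ℕ) (L : ℕ → B ⊕ ℕ), StrictMono s ∧ (∀ t, L (s t) = Sum.inr t) ∧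
      (∀ q t, L q = Sum.inr t → s t ≤ q) ∧
      ((∀ i (a : ℕ → B), (List.range (s i)).map (fun q => Sum.elim id a (L q)) ∈ C) ∨
       (∀ i (a : ℕ → B), (List.range (s i)).map (fun q => Sum.elim id a (L q)) ∉ C)) := by
  obtain ⟨D, ⟨w₀, hw₀⟩, hD, hstep⟩ := carlson_simpson_aux C
  choose f hf using hstep
  let W : ℕ → List (B ⊕ ℕ) := fun k => Nat.rec (w₀.map Sum.inl)
    (fun k W => W ++ (none :: f W.length).map (fun o => o.elim (Sum.inr k) Sum.inl)) k
  have hW0 : W 0 = w₀.map Sum.inl := rfl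
  have hW1 : ∀ k, W (k+1) = W k ++
    (none :: f (W k).length).map (fun o => o.elim (Sum.inr k) Sum.inl) := fun k => rfl
  clear_value W
  have hWD : ∀ k (a : ℕ → B), (W k).map (Sum.elim id a) ∈ D := by
    intro k a
    induction k with
    | zero => simpa [hW0] using hw₀
    | succ k ih =>
      rw [hW1, List.map_append]
      convert hf (W k).length _ ih (by simp) (a k) using 2
      rw [List.map_map]
      apply List.map_congr_left
      intro o _
      cases o <;> simp
  have hs : StrictMono (fun k => (W k).length) := by
    apply strictMono_nat_of_lt_succ
    intro k
    simp [hW1]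
  have hpre : ∀ i j, i ≤ j → W i <+: W j := by
    intro i j hij
    induction hij with
    | refl => exact List.prefix_rfl
    | step _ ih => exact ih.trans (by rw [Nat.succ_eq_add_one, hW1]; exact List.prefix_append _ _)
  have hlen : ∀ q, q < (W (q+1)).length := fun q => hs.id_le (q+1)
  let L : ℕ → B ⊕ ℕ := fun q => (W (q+1))[q]'(hlen q)
  have hL : ∀ k q (h : q < (W k).length), (W k)[q] = L q := by
    intro k q h
    rcases le_total k (q+1) with h' | h'
    · exact (hpre _ _ h').getElem h
    · exact ((hpre _ _ h').getElem (hlen q)).symm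
  have hmap : ∀ k, W k = (List.range (W k).length).map L := by
    intro k
    apply List.ext_getElem
    · simp
    · intro q h1 h2
      simp [hL k q h1]
  refine ⟨fun k => (W k).length, L, hs, ?_, ?_, ?_⟩
  · intro t
    have h : (W t).length < (W (t+1)).length := hs (Nat.lt_succ_self t)
    show L (W t).length = _
    rw [← hL (t+1) _ h]
    simp [hW1]
  · intro q t hq
    have : ∀ k, ∀ q (h : q < (W k).length), ∀ t, (W k)[q] = Sum.inr t → (W t).length ≤ q := by
      intro k
      induction k with
      | zero => 
        intro q h t
        simp [hW0]
      | succ k ih =>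
        intro q h t ht
        by_cases hq : q < (W k).length
        · apply ih q hq
          rw [hL] at ht ⊢
          exact ht
        · simp only [hW1] at ht
          rw [List.getElem_append_right (by omega), List.getElem_map] at ht
          generalize (none :: f (W k).length)[q - (W k).length]'_ = o at ht
          cases o
          · simp at ht; subst ht; omega
          · simp at ht
    exact this _ q (hlen q) t hq
  · have h : ∀ i (a : ℕ → B),
        (List.range (W i).length).map (fun q => Sum.elim id a (L q)) ∈ D := by
      intro i a
      have := hWD i a
      rw [hmap i, List.map_map] at this
      exact this
    rcases hD with hD | hD
    · exact Or.inl fun i a => hD (h i a)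
    · exact Or.inr fun i a => hD (h i a)

theorem minReps_infinite {E : Setoid ℕ} (h : (classes E).Infinite) : (minReps E).Infinite := by
  intro hfin
  apply h
  apply (hfin.image (fun x => {y | E.r x y})).subset
  rintro _ ⟨x, rfl⟩
  classical
  have hex : ∃ y, E.r x y := ⟨x, E.refl x⟩
  refine ⟨Nat.find hex, ?_, ?_⟩
  · intro m hm
    exact Nat.find_min' hex (E.trans (Nat.find_spec hex) hm)
  · ext y
    exact ⟨fun hy => E.trans (Nat.find_spec hex) hy,
      fun hy => E.trans (E.symm (Nat.find_spec hex)) hy⟩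

theorem pRep_strictMono {E : Setoid ℕ} (h : (minReps E).Infinite) : StrictMono (pRep E) :=
  Nat.nth_strictMono h

theorem pRep_range {E : Setoid ℕ} (h : (minReps E).Infinite) : range (pRep E) = minReps E :=
  Nat.range_nth_of_infinite h

theorem exists_idx {E : Setoid ℕ} (h : (minReps E).Infinite) :
    ∃ idx : ℕ → ℕ, (∀ c d, E.r c d ↔ idx c = idx d) ∧ (∀ k, idx (pRep E k) = k) ∧
      ∀ c, pRep E (idx c) ≤ c := by
  have hex : ∀ c, ∃ k, E.r c (pRep E k) ∧ pRep E k ≤ c := by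
    intro c
    classical
    have hex : ∃ y, E.r c y := ⟨c, E.refl c⟩
    have : Nat.find hex ∈ minReps E := by
      intro m hm
      exact Nat.find_min' hex (E.trans (Nat.find_spec hex) hm)
    rw [← pRep_range h] at this
    obtain ⟨k, hk⟩ := this
    refine ⟨k, ?_, ?_⟩
    · rw [hk]; exact Nat.find_spec hex
    · rw [hk]; exact Nat.find_min' hex (E.refl c)
  choose idx h1 h2 using hex
  have hmem : ∀ k, pRep E k ∈ minReps E := fun k => by
    rw [← pRep_range h]; exact ⟨k, rfl⟩
  have huniq : ∀ j k, E.r (pRep E j) (pRep E k) → j = k := by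
    intro j k hjk
    apply (pRep_strictMono h).injective
    exact le_antisymm (hmem j _ hjk) (hmem k _ (E.symm hjk))
  refine ⟨idx, fun c d => ⟨fun hcd => ?_, fun hcd => ?_⟩, fun k => ?_, h2⟩
  · exact huniq _ _ (E.trans (E.symm (h1 c)) (E.trans hcd (h1 d)))
  · have := h1 c
    rw [hcd] at this
    exact E.trans this (E.symm (h1 d))
  · exact (huniq _ _ (h1 _)).symm

theorem approx_eq_imp {G E : Setoid ℕ} (hG : (minReps G).Infinite) (hE : (minReps E).Infinite)
    {m n : ℕ} (h : approx m G = approx n E) : ∀ k ≤ n, pRep G k = pRep E k := by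
  classical
  have hlt : ∀ c, c < pRep G m ↔ c < pRep E n := by
    intro c
    have := Set.ext_iff.1 h (c, c)
    constructor
    · intro hc
      exact (this.1 ⟨hc, hc, G.refl c⟩).1
    · intro hc
      exact (this.2 ⟨hc, hc, E.refl c⟩).1
  have hN : pRep G m = pRep E n := by
    have h1 := hlt (pRep G m)
    have h2 := hlt (pRep E n)
    omega
  have hrel : ∀ c d, c < pRep E n → d < pRep E n → (G.r c d ↔ E.r c d) := by
    intro c d hc hd
    have := Set.ext_iff.1 h (c, d)
    constructor
    · intro hr
      exact (this.1 ⟨(hlt _).2 hc, (hlt _).2 hd, hr⟩).2.2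
    · intro hr
      exact (this.2 ⟨hc, hd, hr⟩).2.2
  have hmr : ∀ c, c < pRep E n → (c ∈ minReps G ↔ c ∈ minReps E) := by
    intro c hc
    constructor
    · intro hm d hd
      by_contra hcd
      push Not at hcd
      exact absurd (hm d ((hrel c d hc (by omega)).2 hd)) (by omega)
    · intro hm d hd
      by_contra hcd
      push Not at hcd
      exact absurd (hm d ((hrel c d hc (by omega)).1 hd)) (by omega)
  have hcount : ∀ N ≤ pRep E n, Nat.count (· ∈ minReps G) N = Nat.count (· ∈ minReps E) N := by
    intro N hN
    rw [Nat.count_eq_card_filter_range, Nat.count_eq_card_filter_range]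
    congr 1
    apply Finset.filter_congr
    intro x hx
    exact hmr x (by have := Finset.mem_range.1 hx; omega)
  have hmemE : ∀ k, pRep E k ∈ minReps E := fun k => by
    rw [← pRep_range hE]; exact ⟨k, rfl⟩
  have hmemG : ∀ k, pRep G k ∈ minReps G := fun k => by
    rw [← pRep_range hG]; exact ⟨k, rfl⟩
  intro k hk
  have hle : pRep E k ≤ pRep E n := (pRep_strictMono hE).monotone hk
  have h1 : Nat.count (· ∈ minReps E) (pRep E k) = k := Nat.count_nth_of_infinite hE k
  have h2 : pRep E k ∈ minReps G := by
    rcases hle.lt_or_eq with h | h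
    · exact (hmr _ h).2 (hmemE k)
    · rw [h, ← hN]; exact hmemG m
  have h3 := Nat.nth_count (p := (· ∈ minReps G)) h2
  rw [hcount _ hle, h1] at h3
  exact h3

/-- **Pigeonhole (axiom A.4) for `𝓔^P_∞`:** given `E` in the space, `n < ω`,
`a = r_n(E)`, and a set `𝓞` of approximations of length `n+1`, there is
`F ∈ [a,E]` such that `r_{n+1}(G) ∈ 𝓞` for all `G ∈ [a,F]`, or
`r_{n+1}(G) ∉ 𝓞` for all `G ∈ [a,F]`. -/
theorem EPaltPigeonhole
    (l : ℕ) (hl : 0 < l) (P : Fin l → Set ℕ)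
    (hinf : ∀ i, (P i).Infinite)
    (hdisj : ∀ i j, i ≠ j → Disjoint (P i) (P j))
    (hcov : ⋃ i, P i = Set.univ)
    (hmin : ∀ i j : Fin l, i < j → sInf (P i) < sInf (P j))
    (E : ↥(EPalt l hl P)) (n : ℕ)
    (O : Set (Set (ℕ × ℕ)))
    (hO : O ⊆ {b | ∃ G ∈ EPalt l hl P, b = approx (n + 1) G}) :
    ∃ F ∈ basicSet (EPalt l hl P) (approx n E.1) E,
      (∀ G ∈ basicSet (EPalt l hl P) (approx n E.1) F, approx (n + 1) G.1 ∈ O) ∨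
      (∀ G ∈ basicSet (EPalt l hl P) (approx n E.1) F, approx (n + 1) G.1 ∉ O) := by
  classical
  have hEi := minReps_infinite E.2.1
  have hpmono := pRep_strictMono hEi
  obtain ⟨idx, hidx, hidxp, hpidx⟩ := exists_idx hEi
  have hEP := E.2.2
  set p : ℕ → ℕ := pRep E.1 with hp
  -- decoding of words
  let h : List (Fin l → Fin (n + 1)) → ℕ → ℕ := fun w k =>
    if k ≤ n then k else
      ((w.getD ((k - (n + 1)) / l) (fun _ => 0)) ⟨(k - (n + 1)) % l, Nat.mod_lt _ hl⟩ : ℕ)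
  let decode : List (Fin l → Fin (n + 1)) → Set (ℕ × ℕ) := fun w =>
    {c | c.1 < p (n + 1 + l * w.length) ∧ c.2 < p (n + 1 + l * w.length) ∧
      h w (idx c.1) = h w (idx c.2)}
  obtain ⟨s, L, hs, hLs, hLle, hcol⟩ := carlson_simpson {w | decode w ∈ O}
  have hdiv : ∀ q r, r < l → (n + 1 + (l * q + r) - (n + 1)) / l = q := by
    intro q r hr
    rw [Nat.add_sub_cancel_left, Nat.mul_add_div hl, Nat.div_eq_of_lt hr, add_zero]
  have hmod : ∀ q r, r < l → (n + 1 + (l * q + r) - (n + 1)) % l = r := by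
    intro q r hr
    rw [Nat.add_sub_cancel_left, Nat.mul_add_mod, Nat.mod_eq_of_lt hr]
  have hform : ∀ k, n < k → ∃ q r, r < l ∧ k = n + 1 + (l * q + r) := by
    intro k hk
    refine ⟨(k - (n + 1)) / l, (k - (n + 1)) % l, Nat.mod_lt _ hl, ?_⟩
    rw [Nat.div_add_mod]
    omega
  have hh1 : ∀ w k, k ≤ n → h w k = k := fun w k hk => if_pos hk
  have hh2 : ∀ w q r (hr : r < l), h w (n + 1 + (l * q + r)) =
      ((w.getD q (fun _ => 0)) ⟨r, hr⟩ : ℕ) := by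
    intro w q r hr
    have : ¬ (n + 1 + (l * q + r) ≤ n) := by omega
    simp only [h, if_neg this, hdiv q r hr, hmod q r hr]
  -- the collapsing map
  let g : ℕ → ℕ := fun k => if k ≤ n then k else
    Sum.elim (fun β : Fin l → Fin (n + 1) => (β ⟨(k - (n + 1)) % l, Nat.mod_lt _ hl⟩ : ℕ))
      (fun t => n + 1 + (l * s t + (k - (n + 1)) % l)) (L ((k - (n + 1)) / l))
  have hg1 : ∀ k, k ≤ n → g k = k := fun k hk => if_pos hk
  have hg2 : ∀ q r (hr : r < l) β, L q = Sum.inl β → g (n + 1 + (l * q + r)) = (β ⟨r, hr⟩ : ℕ) := by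
    intro q r hr β hβ
    have : ¬ (n + 1 + (l * q + r) ≤ n) := by omega
    simp only [g, if_neg this, hdiv q r hr, hmod q r hr, hβ, Sum.elim_inl]
  have hg3 : ∀ q r (_ : r < l) t, L q = Sum.inr t →
      g (n + 1 + (l * q + r)) = n + 1 + (l * s t + r) := by
    intro q r hr t ht
    have : ¬ (n + 1 + (l * q + r) ≤ n) := by omega
    simp only [g, if_neg this, hdiv q r hr, hmod q r hr, ht, Sum.elim_inr]
  let φ : ℕ → ℕ := fun j => if j ≤ n then j else
    n + 1 + (l * s ((j - (n + 1)) / l) + (j - (n + 1)) % l)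
  have hφ1 : ∀ k, k ≤ n → φ k = k := fun k hk => if_pos hk
  have hφ2 : ∀ q r, r < l → φ (n + 1 + (l * q + r)) = n + 1 + (l * s q + r) := by
    intro q r hr
    have : ¬ (n + 1 + (l * q + r) ≤ n) := by omega
    simp only [φ, if_neg this, hdiv q r hr, hmod q r hr]
  clear_value h g φ
  have hgle : ∀ k, g k ≤ k := by
    intro k
    rcases le_or_gt k n with hk | hk
    · exact (hg1 k hk).le
    · obtain ⟨q, r, hr, rfl⟩ := hform k hk
      rcases hq : L q with β | t
      · rw [hg2 q r hr β hq]
        have := (β ⟨r, hr⟩).2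
        omega
      · rw [hg3 q r hr t hq]
        have := Nat.mul_le_mul_left l (hLle q t hq)
        omega
  have hgg : ∀ k, g (g k) = g k := by
    intro k
    rcases le_or_gt k n with hk | hk
    · rw [hg1 k hk, hg1 k hk]
    · obtain ⟨q, r, hr, rfl⟩ := hform k hk
      rcases hq : L q with β | t
      · rw [hg2 q r hr β hq]
        exact hg1 _ (by have := (β ⟨r, hr⟩).2; omega)
      · rw [hg3 q r hr t hq]
        exact hg3 _ r hr t (hLs t)
  have hgφ : ∀ j, g (φ j) = φ j := by
    intro j
    rcases le_or_gt j n with hk | hk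
    · rw [hφ1 j hk, hg1 j hk]
    · obtain ⟨q, r, hr, rfl⟩ := hform j hk
      rw [hφ2 q r hr]
      exact hg3 _ r hr q (hLs q)
  have hgfix : ∀ k, g k = k → ∃ j, φ j = k := by
    intro k hgk
    rcases le_or_gt k n with hk | hk
    · exact ⟨k, hφ1 k hk⟩
    · obtain ⟨q, r, hr, rfl⟩ := hform k hk
      rcases hq : L q with β | t
      · rw [hg2 q r hr β hq] at hgk
        have := (β ⟨r, hr⟩).2
        omega
      · rw [hg3 q r hr t hq] at hgk
        exact ⟨n + 1 + (l * t + r), by rw [hφ2 t r hr, hgk]⟩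
  have hφmono : StrictMono φ := by
    apply strictMono_nat_of_lt_succ
    intro j
    rcases lt_trichotomy j n with hk | hk | hk
    · rw [hφ1 j hk.le, hφ1 (j + 1) hk]; omega
    · subst hk
      have := hφ2 0 0 hl
      rw [mul_zero, zero_add, add_zero] at this
      rw [hφ1 j le_rfl, this]
      omega
    · obtain ⟨q, r, hr, rfl⟩ := hform j hk
      rcases Nat.lt_or_ge (r + 1) l with hr' | hr'
      · have := hφ2 q (r + 1) hr'
        rw [show n + 1 + (l * q + (r + 1)) = n + 1 + (l * q + r) + 1 by ring] at this
        rw [this, hφ2 q r hr]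
        omega
      · have hl' : l = r + 1 := by omega
        have := hφ2 (q + 1) 0 hl
        rw [show n + 1 + (l * (q + 1) + 0) = n + 1 + (l * q + r) + 1 by
          rw [Nat.mul_add]; omega] at this
        rw [this, hφ2 q r hr]
        have h1 : s q + 1 ≤ s (q + 1) := hs (Nat.lt_succ_self q)
        have h2 := Nat.mul_le_mul_left l h1
        rw [Nat.mul_add] at h2
        omega
  have hφmod : ∀ j, φ j % l = j % l := by
    intro j
    rcases le_or_gt j n with hk | hk
    · rw [hφ1 j hk]
    · obtain ⟨q, r, hr, rfl⟩ := hform j hk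
      rw [hφ2 q r hr]
      simp [Nat.add_mod]
  -- the coarsening
  let F : Setoid ℕ := Setoid.ker (fun c => g (idx c))
  have hF : ∀ c d, F.r c d ↔ g (idx c) = g (idx d) := fun c d => Iff.rfl
  clear_value F
  have hFmin : minReps F = range (p ∘ φ) := by
    ext c
    constructor
    · intro hc
      have h1 : c ≤ p (g (idx c)) := hc _ ((hF _ _).2 (by rw [hidxp, hgg]))
      have h2 : p (g (idx c)) ≤ p (idx c) := hpmono.monotone (hgle _)
      have h3 := hpidx c
      have h4 : g (idx c) = idx c := hpmono.injective (by omega)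
      obtain ⟨j, hj⟩ := hgfix _ h4
      exact ⟨j, by show p (φ j) = c; rw [hj]; omega⟩
    · rintro ⟨j, rfl⟩ d hd
      have h1 : φ j = g (idx d) := by
        have := (hF _ _).1 hd
        rwa [Function.comp_apply, hidxp, hgφ] at this
      have h2 := hgle (idx d)
      exact (hpmono.monotone (h1.le.trans h2)).trans (hpidx d)
  have hpφ : StrictMono (p ∘ φ) := hpmono.comp hφmono
  have hFi : (minReps F).Infinite := by
    rw [hFmin]; exact Set.infinite_range_of_injective hpφ.injective
  have hFp : pRep F = p ∘ φ := by
    rw [← (pRep_strictMono hFi).range_inj hpφ, pRep_range hFi, hFmin]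
  have hFmem : F ∈ EPalt l hl P := by
    refine ⟨?_, fun k => ?_⟩
    · apply Set.infinite_of_injective_forall_mem (f := fun j => {y | F.r (p (φ j)) y})
      · intro j j' hjj
        have h1 : p (φ j') ∈ {y | F.r (p (φ j)) y} := by
          have : p (φ j') ∈ {y | F.r (p (φ j')) y} := F.refl _
          rwa [← show {y | F.r (p (φ j)) y} = {y | F.r (p (φ j')) y} from hjj] at this
        have h2 := (hF _ _).1 h1
        rw [hidxp, hidxp, hgφ, hgφ] at h2
        exact hφmono.injective h2
      · intro j
        exact ⟨_, rfl⟩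
    · rw [hFp, Function.comp_apply]
      have := hEP (φ k)
      convert this using 3
      exact (hφmod k).symm
  have hlt : ∀ c K, c < p K → idx c < K := by
    intro c K hc
    exact hpmono.lt_iff_lt.1 ((hpidx c).trans_lt hc)
  have hFE : Coarsens F E.1 := by
    intro c d hcd
    rw [hF, (hidx c d).1 hcd]
  have hFn : approx n F = approx n E.1 := by
    have h0 : pRep F n = pRep E.1 n := by
      rw [hFp, Function.comp_apply, hφ1 n le_rfl]
    ext ⟨c, d⟩
    show (c < pRep F n ∧ d < pRep F n ∧ F.r c d) ↔ (c < pRep E.1 n ∧ d < pRep E.1 n ∧ E.1.r c d)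
    rw [h0]
    refine and_congr_right fun hc => and_congr_right fun hd => ?_
    rw [hF, hidx, hg1 _ (hlt c n hc).le, hg1 _ (hlt d n hd).le]
  have key : ∀ G ∈ basicSet (EPalt l hl P) (approx n E.1) ⟨F, hFmem⟩, ∃ i,
      ∃ a : ℕ → (Fin l → Fin (n + 1)), approx (n + 1) G.1 =
        decode ((List.range (s i)).map (fun q => Sum.elim id a (L q))) := by
    rintro ⟨G, hGmem⟩ ⟨hGF, m, hGm⟩
    change Coarsens G F at hGF
    change approx m G = approx n E.1 at hGm
    have hGi := minReps_infinite hGmem.1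
    have hGmono := pRep_strictMono hGi
    obtain ⟨idxG, hidxG, hidxGp, hGpidx⟩ := exists_idx hGi
    have hGp : ∀ k ≤ n, pRep G k = p k := approx_eq_imp hGi hEi hGm
    have hmem : pRep G (n + 1) ∈ minReps F := by
      have h1 : pRep G (n + 1) ∈ minReps G := by
        rw [← pRep_range hGi]; exact ⟨_, rfl⟩
      intro d hd
      exact h1 d (hGF _ _ hd)
    rw [hFmin] at hmem
    obtain ⟨j, hj⟩ := hmem
    have hjn : n < j := by
      have h1 : p (φ n) < p (φ j) := by
        rw [hφ1 n le_rfl, ← hGp n le_rfl]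
        rw [Function.comp_apply] at hj
        rw [hj]
        exact hGmono (Nat.lt_succ_self n)
      exact hφmono.lt_iff_lt.1 (hpmono.lt_iff_lt.1 h1)
    have hjmod : j % l = (n + 1) % l := by
      by_contra hne
      have h1 := hGmem.2 (n + 1)
      have h2 := hFmem.2 j
      rw [hFp, hj] at h2
      exact Set.disjoint_left.1 (hdisj _ _ (by simpa [Fin.ext_iff] using hne)) h2 h1
    obtain ⟨i, r, hr, rfl⟩ := hform j hjn
    have hr0 : r = 0 := by
      have h1 : n + 1 + (l * i + r) ≡ n + 1 + 0 [MOD l] := hjmod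
      have h2 := Nat.ModEq.add_left_cancel' _ h1
      have h3 : (l * i + r) % l = 0 % l := h2
      rw [Nat.mul_add_mod, Nat.mod_eq_of_lt hr, Nat.zero_mod] at h3
      exact h3
    subst hr0
    rw [Function.comp_apply, hφ2 i 0 hl, add_zero] at hj
    refine ⟨i, fun t r => Fin.ofNat (n + 1) (idxG (p (n + 1 + (l * s t + r)))), ?_⟩
    set a : ℕ → (Fin l → Fin (n + 1)) :=
      fun t r => Fin.ofNat (n + 1) (idxG (p (n + 1 + (l * s t + r)))) with ha
    set w := (List.range (s i)).map (fun q => Sum.elim id a (L q)) with hw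
    have hwlen : w.length = s i := by simp [hw]
    have hwget : ∀ q, q < s i → w.getD q (fun _ => 0) = Sum.elim id a (L q) := by
      intro q hq
      simp [hw, List.getD, hq]
    have hav : ∀ t (r : Fin l), t < i → (a t r : ℕ) = idxG (p (n + 1 + (l * s t + r))) := by
      intro t r ht
      have h1 : s t + 1 ≤ s i := hs ht
      have h2 := Nat.mul_le_mul_left l h1
      rw [Nat.mul_add] at h2
      have h3 : p (n + 1 + (l * s t + r)) < p (n + 1 + l * s i) :=
        hpmono (by have := r.2; omega)
      rw [hj] at h3
      have h4 : idxG (p (n + 1 + (l * s t + r))) < n + 1 :=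
        hGmono.lt_iff_lt.1 ((hGpidx _).trans_lt h3)
      simp only [ha, Fin.val_ofNat]
      exact Nat.mod_eq_of_lt h4
    have hidxGk : ∀ k, k ≤ n → idxG (p k) = k := by
      intro k hk
      rw [← hGp k hk, hidxGp]
    have hmain : ∀ c, c < pRep G (n + 1) → idxG c = h w (idx c) := by
      intro c hc
      rw [← hj] at hc
      have hk := hlt _ _ hc
      have h1 : idxG c = idxG (p (g (idx c))) := by
        rw [← hidxG]
        apply hGF
        rw [hF, hidxp, hgg]
      rw [h1]
      generalize idx c = k at hk
      rcases le_or_gt k n with hkn | hkn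
      · rw [hg1 k hkn, hh1 w k hkn, hidxGk k hkn]
      · obtain ⟨q, r, hr, rfl⟩ := hform k hkn
        have hqs : q < s i := by
          have : l * q < l * s i := by omega
          exact Nat.lt_of_mul_lt_mul_left this
        rw [hh2 w q r hr, hwget q hqs]
        rcases hq : L q with β | t
        · rw [hg2 q r hr β hq, hidxGk _ (by have := (β ⟨r, hr⟩).2; omega)]
          rfl
        · rw [hg3 q r hr t hq, Sum.elim_inr, hav t ⟨r, hr⟩]
          exact hs.lt_iff_lt.1 ((hLle q t hq).trans_lt hqs)
    ext ⟨c, d⟩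
    show (c < pRep G (n + 1) ∧ d < pRep G (n + 1) ∧ G.r c d) ↔
      (c < p (n + 1 + l * w.length) ∧ d < p (n + 1 + l * w.length) ∧ h w (idx c) = h w (idx d))
    rw [hwlen, hj]
    refine and_congr_right fun hc => and_congr_right fun hd => ?_
    rw [hidxG, hmain c hc, hmain d hd]
  refine ⟨⟨F, hFmem⟩, ⟨hFE, n, hFn⟩, ?_⟩
  rcases hcol with hcol | hcol
  · left
    intro G hG
    obtain ⟨i, a, hGa⟩ := key G hG
    rw [hGa]
    exact hcol i a
  · right
    intro G hG
    obtain ⟨i, a, hGa⟩ := key G hG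
    rw [hGa]
    exact hcol i a

end DualRamsey
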